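/- Let Δ be a convex lattice polygon with boundary data β, and let γ be a λ-increasing lattice path of length n from p to q contained in Δ that is not β₋-initial. Let k be ANY index with 0 < k < n at which γ makes a right turn, i.e. det(γ(k)−γ(k−1), γ(k+1)−γ(k)) < 0. Let γ′ be the path obtained from γ by deleting the point γ(k), let γ″ be the path obtained by replacing γ(k) with γ(k−1)+γ(k+1)−γ(k), and let T be the triangle with vertices γ(k−1), γ(k), γ(k+1). Then mult₋(γ) = 2·Area(T)·mult₋(γ′) + mult₋(γ″), where the last term is taken to be 0 if γ″ is not contained in Δ. In other words, the negative multiplicity of a lattice path stays the same if at each step of the recursion any right turn is used, not necessarily the first one. -/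

import Mathlib

open Classical

noncomputable section

namespace TropPaths

/-- Lattice points of the plane. -/
abbrev Pt := ℤ × ℤ

/-- The order on `ℤ²` induced by `λ(x,y) = x - εy` for a small irrational `ε > 0`:
`p ≺ q` iff `p₁ < q₁`, or (`p₁ = q₁` and `p₂ > q₂`). -/
def lamLT (p q : Pt) : Prop := p.1 < q.1 ∨ (p.1 = q.1 ∧ q.2 < p.2)

/-- A lattice path, recorded as the list of its points, is `λ`-increasing. -/
def Increasing (γ : List Pt) : Prop := List.Chain' lamLT γ

/-- The determinant of two vectors in `ℤ²`. -/
def det (u v : Pt) : ℤ := u.1 * v.2 - u.2 * v.1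

/-- The `k`-th point of a path (junk value out of range). -/
def pt (γ : List Pt) (k : ℕ) : Pt := γ.getD k (0, 0)

/-- The `k`-th step vector of a path. -/
def stepAt (γ : List Pt) (k : ℕ) : Pt := pt γ (k + 1) - pt γ k

/-- The list of all step vectors of a path. -/
def steps (γ : List Pt) : List Pt := List.zipWith (fun a b => b - a) γ γ.tail

/-- The multiset of down steps `(0,-s)`, `s > 0`, of a path. -/
def downSteps (γ : List Pt) : Multiset Pt :=
  Multiset.filter (fun v => v.1 = 0 ∧ v.2 < 0) (steps γ : Multiset Pt)

/-- The multiset of up-right steps of a path. -/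
def upRightSteps (γ : List Pt) : Multiset Pt :=
  Multiset.filter (fun v => 0 < v.1 ∧ 0 < v.2) (steps γ : Multiset Pt)

/-- The path makes a turn of sign `s` at the (interior) index `k`; for left turns
`s = (0 < ·)`, for right turns `s = (· < 0)`. -/
def TurnAt (s : ℤ → Prop) (γ : List Pt) (k : ℕ) : Prop :=
  0 < k ∧ k + 1 < γ.length ∧ s (det (pt γ k - pt γ (k - 1)) (pt γ (k + 1) - pt γ k))

/-- `k` is the first turn of sign `s` of the path. -/
def FirstTurn (s : ℤ → Prop) (γ : List Pt) (k : ℕ) : Prop :=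
  TurnAt s γ k ∧ ∀ j, TurnAt s γ j → k ≤ j

/-- Twice the area of the triangle with vertices `γ(k-1), γ(k), γ(k+1)`. -/
def triArea2 (γ : List Pt) (k : ℕ) : ℕ :=
  (det (pt γ k - pt γ (k - 1)) (pt γ (k + 1) - pt γ k)).natAbs

/-- The path obtained by cutting the corner at index `k`, i.e. deleting the point `γ(k)`. -/
def cut (γ : List Pt) (k : ℕ) : List Pt := γ.eraseIdx k

/-- The path obtained by completing the parallelogram at index `k`, i.e. replacing
`γ(k)` by `γ(k-1) + γ(k+1) - γ(k)`. -/
def push (γ : List Pt) (k : ℕ) : List Pt :=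
  γ.set k (pt γ (k - 1) + pt γ (k + 1) - pt γ k)

/-- All points of the path lie in `Δ`. -/
def Inside (Δ : Set Pt) (γ : List Pt) : Prop := ∀ z ∈ γ, z ∈ Δ

/-- Mikhalkin's multiplicity recursion, as a functional relation: `MultRel Δ Init s γ m`
means that the recursion (performed always at the *first* turn of sign `s`) assigns the
multiplicity `m` to the path `γ`.  Here `Δ` is the set of lattice points of the polygon,
`Init` the set of initial paths (of multiplicity `1`), and `s` the turn sign
(`0 < ·` for left turns / `mult₊`, `· < 0` for right turns / `mult₋`). -/
inductive MultRel (Δ : Set Pt) (Init : List Pt → Prop) (s : ℤ → Prop) : List Pt → ℕ → Prop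
  | init {γ : List Pt} : Init γ → MultRel Δ Init s γ 1
  | noTurn {γ : List Pt} : ¬Init γ → (∀ k, ¬TurnAt s γ k) → MultRel Δ Init s γ 0
  | stepIn {γ : List Pt} {k m' m'' : ℕ} : ¬Init γ → FirstTurn s γ k →
      Inside Δ (push γ k) → MultRel Δ Init s (cut γ k) m' →
      MultRel Δ Init s (push γ k) m'' →
      MultRel Δ Init s γ (triArea2 γ k * m' + m'')
  | stepOut {γ : List Pt} {k m' : ℕ} : ¬Init γ → FirstTurn s γ k →
      ¬Inside Δ (push γ k) → MultRel Δ Init s (cut γ k) m' →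
      MultRel Δ Init s γ (triArea2 γ k * m')

/-- The multiplicity function determined by Mikhalkin's recursion. -/
def multOf (Δ : Set Pt) (Init : List Pt → Prop) (s : ℤ → Prop) (γ : List Pt) : ℕ :=
  if h : ∃ m, MultRel Δ Init s γ m then h.choose else 0

/-- `γ ≺ δ`: the path `δ` is obtained from `γ` by finitely many steps of the multiplicity
recursion (each step cuts the corner at the first turn of sign `s`, or completes the
parallelogram there). -/
inductive Reaches (Δ : Set Pt) (Init : List Pt → Prop) (s : ℤ → Prop) : List Pt → List Pt → Prop
  | refl (γ : List Pt) : Reaches Δ Init s γ γ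
  | cutStep {γ δ : List Pt} {k : ℕ} : ¬Init γ → FirstTurn s γ k →
      Reaches Δ Init s (cut γ k) δ → Reaches Δ Init s γ δ
  | pushStep {γ δ : List Pt} {k : ℕ} : ¬Init γ → FirstTurn s γ k →
      Inside Δ (push γ k) → Reaches Δ Init s (push γ k) δ → Reaches Δ Init s γ δ

/-- The lattice path starting at `p` with the given list of step vectors. -/
def pathFrom : Pt → List Pt → List Pt
  | p, [] => [p]
  | p, v :: vs => p :: pathFrom (p + v) vs

/-- Horizontal (rightward) steps of the given sizes. -/
def hSteps (l : List ℕ) : List Pt := l.map fun k => ((k : ℤ), 0)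

/-- Vertical downward steps of the given sizes. -/
def dSteps (l : List ℕ) : List Pt := l.map fun k => ((0 : ℤ), -(k : ℤ))

/-- A multiset of positive integers is a partition of `t`. -/
def IsPartition (m : Multiset ℕ) (t : ℕ) : Prop := (∀ k ∈ m, 0 < k) ∧ m.sum = t

/-! ## The rectangle `[0,c] × [0,d]` -/

/-- The lattice points of the rectangle with vertices `(0,0), (c,0), (0,d), (c,d)`. -/
def rect (c d : ℕ) : Set Pt := {z | 0 ≤ z.1 ∧ z.1 ≤ (c : ℤ) ∧ 0 ≤ z.2 ∧ z.2 ≤ (d : ℤ)}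

/-- `β₊`-initial paths of the rectangle: from `p = (0,d)` clockwise along the top edge with
step sizes the parts of `μ₂` and then down the right edge with step sizes the parts of `ν₂`. -/
def InitPlusRect (d : ℕ) (μ₂ ν₂ : Multiset ℕ) (γ : List Pt) : Prop :=
  ∃ s t : List ℕ, (s : Multiset ℕ) = μ₂ ∧ (t : Multiset ℕ) = ν₂ ∧
    γ = pathFrom (0, (d : ℤ)) (hSteps s ++ dSteps t)

/-- `β₋`-initial paths of the rectangle: from `p = (0,d)` counterclockwise down the left edge
with step sizes the parts of `ν₁` and then along the bottom edge with step sizes the parts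
of `μ₁`. -/
def InitMinusRect (d : ℕ) (μ₁ ν₁ : Multiset ℕ) (γ : List Pt) : Prop :=
  ∃ s t : List ℕ, (s : Multiset ℕ) = ν₁ ∧ (t : Multiset ℕ) = μ₁ ∧
    γ = pathFrom (0, (d : ℤ)) (dSteps s ++ hSteps t)

/-- `mult₊` for the rectangle with boundary data `(μ₁, μ₂, ν₁, ν₂)`. -/
def multPlusRect (c d : ℕ) (μ₂ ν₂ : Multiset ℕ) : List Pt → ℕ :=
  multOf (rect c d) (InitPlusRect d μ₂ ν₂) (fun x => 0 < x)

/-- `mult₋` for the rectangle with boundary data `(μ₁, μ₂, ν₁, ν₂)`. -/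
def multMinusRect (c d : ℕ) (μ₁ ν₁ : Multiset ℕ) : List Pt → ℕ :=
  multOf (rect c d) (InitMinusRect d μ₁ ν₁) (fun x => x < 0)

/-- `mult = mult₊ · mult₋` for the rectangle with boundary data `(μ₁, μ₂, ν₁, ν₂)`. -/
def multRect (c d : ℕ) (μ₁ μ₂ ν₁ ν₂ : Multiset ℕ) (γ : List Pt) : ℕ :=
  multPlusRect c d μ₂ ν₂ γ * multMinusRect c d μ₁ ν₁ γ

/-- A `λ`-increasing lattice path from `(0,d)` to `(c,0)` contained in the rectangle. -/
def IsPathRect (c d : ℕ) (γ : List Pt) : Prop :=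
  Increasing γ ∧ γ.head? = some (0, (d : ℤ)) ∧ γ.getLast? = some ((c : ℤ), 0) ∧
    Inside (rect c d) γ

/-- The genericity condition: all subset sums of the `xᵢ` are distinct. -/
def Generic {n : ℕ} (x : Fin n → ℕ) : Prop :=
  ∀ I J : Finset (Fin n), I ≠ J → ∑ i ∈ I, x i ≠ ∑ j ∈ J, x j

/-! ## General convex lattice polygons with boundary data -/

/-- The displacement vector of an edge: (lattice length of the edge) times the primitive
direction.  An edge is recorded as a pair (primitive direction, multiset of step lengths
`β_e`, listing each length `k` with multiplicity `β_e(k)`). -/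
def edgeVec (e : Pt × Multiset ℕ) : Pt := ((e.2.sum : ℤ) * e.1.1, (e.2.sum : ℤ) * e.1.2)

/-- The endpoint of a chain of edges starting at `p`. -/
def chainEnd (p : Pt) (l : List (Pt × Multiset ℕ)) : Pt := p + (l.map edgeVec).sum

/-- The successive vertices of a chain of edges starting at `p`. -/
def chainPts : Pt → List (Pt × Multiset ℕ) → List Pt
  | p, [] => [p]
  | p, e :: es => p :: chainPts (p + edgeVec e) es

/-- A convex lattice polygon together with boundary data `β`: it is encoded by its
`λ`-minimal vertex `p`, and its two boundary chains from `p` to the `λ`-maximal vertex `q`,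
the clockwise one `cw` and the counterclockwise one `ccw`.  Each edge carries its primitive
direction and the multiset of step lengths `β_e` (which must sum to the lattice length of
the edge; here the lattice length is *defined* as that sum). -/
structure PolyData where
  /-- the `λ`-minimal vertex -/
  p : Pt
  /-- the clockwise boundary chain from `p` to `q` -/
  cw : List (Pt × Multiset ℕ)
  /-- the counterclockwise boundary chain from `p` to `q` -/
  ccw : List (Pt × Multiset ℕ)
  cw_ne : cw ≠ []
  ccw_ne : ccw ≠ []
  /-- all edge directions are `λ`-positive -/
  cw_lam : ∀ e ∈ cw, lamLT (0, 0) e.1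
  ccw_lam : ∀ e ∈ ccw, lamLT (0, 0) e.1
  /-- edge directions are primitive -/
  cw_prim : ∀ e ∈ cw, Int.gcd e.1.1 e.1.2 = 1
  ccw_prim : ∀ e ∈ ccw, Int.gcd e.1.1 e.1.2 = 1
  /-- the step lengths on each edge are positive, and each edge has positive lattice length -/
  cw_pos : ∀ e ∈ cw, e.2 ≠ 0 ∧ ∀ k ∈ e.2, 0 < k
  ccw_pos : ∀ e ∈ ccw, e.2 ≠ 0 ∧ ∀ k ∈ e.2, 0 < k
  /-- strict convexity: consecutive clockwise edges turn right -/
  cw_conv : (cw.map Prod.fst).Chain' fun u v => det u v < 0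
  /-- strict convexity: consecutive counterclockwise edges turn left -/
  ccw_conv : (ccw.map Prod.fst).Chain' fun u v => 0 < det u v
  /-- the two chains have common endpoint `q` -/
  closes : chainEnd p cw = chainEnd p ccw
  /-- convexity at the vertex `p` -/
  junct_p : ∀ u w : Pt, (cw.map Prod.fst).head? = some u →
    (ccw.map Prod.fst).head? = some w → 0 < det w u
  /-- convexity at the vertex `q` -/
  junct_q : ∀ u w : Pt, (cw.map Prod.fst).getLast? = some u →
    (ccw.map Prod.fst).getLast? = some w → 0 < det u w

/-- The `λ`-maximal vertex of the polygon. -/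
def PolyData.q (P : PolyData) : Pt := chainEnd P.p P.ccw

/-- The canonical embedding `ℤ² → ℝ²`. -/
def toR (z : Pt) : ℝ × ℝ := ((z.1 : ℝ), (z.2 : ℝ))

/-- The set of lattice points of the polygon: all lattice points of the convex hull of the
boundary vertices. -/
def polySet (P : PolyData) : Set Pt :=
  {z | toR z ∈ convexHull ℝ
    (toR '' {w | w ∈ chainPts P.p P.cw ∨ w ∈ chainPts P.p P.ccw})}

/-- `ExpandChain chain s` holds if the list of step vectors `s` traverses the edges of
`chain` in order, taking on each edge `e` exactly `β_e(k)` steps of lattice length `k`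
(in some order). -/
def ExpandChain : List (Pt × Multiset ℕ) → List Pt → Prop
  | [], s => s = []
  | e :: es, s => ∃ (l : List ℕ) (r : List Pt), (l : Multiset ℕ) = e.2 ∧ ExpandChain es r ∧
      s = (l.map fun k => ((k : ℤ) * e.1.1, (k : ℤ) * e.1.2)) ++ r

/-- The initial paths determined by a boundary chain: the paths from `p` to `q` along the
chain whose steps on each edge `e` realize the data `β_e`. -/
def InitChain (p : Pt) (chain : List (Pt × Multiset ℕ)) (γ : List Pt) : Prop :=
  ∃ s, ExpandChain chain s ∧ γ = pathFrom p s

/-- `mult₋` of a path in the polygon `P`. -/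
def multMinusP (P : PolyData) : List Pt → ℕ :=
  multOf (polySet P) (InitChain P.p P.ccw) (fun x => x < 0)

/-- `mult₊` of a path in the polygon `P`. -/
def multPlusP (P : PolyData) : List Pt → ℕ :=
  multOf (polySet P) (InitChain P.p P.cw) (fun x => 0 < x)

/-!
At a corner with steps `u, v` the recursion reads `[u] [v] - [v] [u] = -det u v • [u + v]`. These
are the relations of a Lie algebra, and the Jacobi identity makes the straightening of words with
them confluent: by induction on the length and the number of inversions of the word of steps, the
recursion holds at every right turn as soon as it holds at one.

This argument ignores the condition that the pushed path lies in `Δ`, and that condition can be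
dropped. A path pushed out of `Δ` crosses a supporting line below `Δ`. A right turn lies above
the chord that cuts it off, so the path still crosses that line after any further cuts and pushes.
Hence it never becomes initial, and its multiplicity in the whole plane is zero.
-/

/-! ### Determinants of `λ`-positive vectors -/

theorem det_swap (u v : Pt) : det v u = -det u v := by
  simp only [det]; ring

theorem det_add_left (u v w : Pt) : det (u + v) w = det u w + det v w := by
  simp only [det, Prod.fst_add, Prod.snd_add]; ring

theorem det_add_right (u v w : Pt) : det u (v + w) = det u v + det u w := by
  simp only [det, Prod.fst_add, Prod.snd_add]; ring

/-- `v` is positive for `λ`, i.e. `v` is a possible step of a `λ`-increasing path. -/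
def LamPos (v : Pt) : Prop := lamLT 0 v

theorem lamPos_iff {v : Pt} : LamPos v ↔ 0 < v.1 ∨ v.1 = 0 ∧ v.2 < 0 := by
  simp only [LamPos, lamLT, Prod.fst_zero, Prod.snd_zero, eq_comm]

theorem lamPos_sub_iff {p q : Pt} : LamPos (q - p) ↔ lamLT p q := by
  simp only [lamPos_iff, lamLT, Prod.fst_sub, Prod.snd_sub]
  omega

theorem LamPos.fst_nonneg {v : Pt} (hv : LamPos v) : 0 ≤ v.1 := by
  rcases lamPos_iff.1 hv with h | ⟨h, -⟩
  exacts [h.le, h.ge]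

theorem LamPos.add {u v : Pt} (hu : LamPos u) (hv : LamPos v) : LamPos (u + v) := by
  rw [lamPos_iff] at *
  simp only [Prod.fst_add, Prod.snd_add]
  omega

/-- A vertical `λ`-positive vector points downwards, and only turns left. -/
theorem LamPos.fst_pos_of_det_neg {u v : Pt} (hu : LamPos u) (hv : LamPos v)
    (h : det u v < 0) : 0 < u.1 := by
  rcases lamPos_iff.1 hu with hu | ⟨hu₁, hu₂⟩
  · exact hu
  · have : 0 ≤ det u v := by
      simpa only [det, hu₁, zero_mul, zero_sub, Left.nonneg_neg_iff] using
        mul_nonpos_of_nonpos_of_nonneg hu₂.le hv.fst_nonneg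
    exact absurd h this.not_gt

theorem fst_mul_det (a b c : Pt) : b.1 * det a c = a.1 * det b c + c.1 * det a b := by
  simp only [det]; ring

theorem det_neg_of_neg_of_nonpos {a b c : Pt} (ha : LamPos a) (hb : LamPos b) (hc : LamPos c)
    (hab : det a b < 0) (hbc : det b c ≤ 0) : det a c < 0 := by
  have ha₁ : 0 < a.1 := ha.fst_pos_of_det_neg hb hab
  rcases lamPos_iff.1 hc with hc₁ | ⟨hc₁, hc₂⟩
  · have hb₁ : 0 ≤ b.1 := hb.fst_nonneg
    nlinarith [fst_mul_det a b c]
  · simp only [det, hc₁, mul_zero, sub_zero]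
    exact mul_neg_of_pos_of_neg ha₁ hc₂

theorem det_neg_of_nonpos_of_neg {a b c : Pt} (ha : LamPos a) (hb : LamPos b) (hc : LamPos c)
    (hab : det a b ≤ 0) (hbc : det b c < 0) : det a c < 0 := by
  have hb₁ : 0 < b.1 := hb.fst_pos_of_det_neg hc hbc
  have hc₁ : 0 ≤ c.1 := hc.fst_nonneg
  have hrel := fst_mul_det a b c
  rcases lamPos_iff.1 ha with ha₁ | ⟨ha₁, ha₂⟩
  · nlinarith
  · simp only [det, ha₁, zero_mul, zero_sub] at hab
    nlinarith

theorem det_eq_zero_trans {a b c : Pt} (hb : LamPos b) (hab : det a b = 0)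
    (hbc : det b c = 0) : det a c = 0 := by
  have hrel : b.1 * det a c = 0 := by
    rw [fst_mul_det a b c, hab, hbc, mul_zero, mul_zero, add_zero]
  rcases mul_eq_zero.1 hrel with hb₁ | h
  · have hb₂ : b.2 ≠ 0 := by
      have := lamPos_iff.1 hb
      omega
    have ha₁ : a.1 = 0 := by simpa [det, hb₁, hb₂] using hab
    have hc₁ : c.1 = 0 := by simpa [det, hb₁, hb₂] using hbc
    simp [det, ha₁, hc₁]
  · exact h

/-! ### The order of steps -/

/-- The step `u` has to be moved past a later step `v` when straightening a path: `u, v` turn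
right, or they are parallel and `v` is the shorter one. The tie-break makes any two distinct
steps comparable. -/
def Descends (u v : Pt) : Prop := det u v < 0 ∨ det u v = 0 ∧ lamLT v u

theorem Descends.det_nonpos {u v : Pt} (h : Descends u v) : det u v ≤ 0 :=
  h.elim le_of_lt fun h => h.1.le

theorem Descends.asymm {u v : Pt} (h : Descends u v) : ¬Descends v u := by
  simp only [Descends, det_swap u v, lamLT] at *
  omega

theorem descends_trichotomous (u v : Pt) : Descends u v ∨ u = v ∨ Descends v u := by
  simp only [Descends, det_swap u v, lamLT, Prod.ext_iff]
  omega

theorem Descends.trans {a b c : Pt} (ha : LamPos a) (hb : LamPos b) (hc : LamPos c)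
    (hab : Descends a b) (hbc : Descends b c) : Descends a c := by
  rcases hab with hab' | ⟨hab', hba⟩
  · exact .inl (det_neg_of_neg_of_nonpos ha hb hc hab' hbc.det_nonpos)
  · rcases hbc with hbc' | ⟨hbc', hcb⟩
    · exact .inl (det_neg_of_nonpos_of_neg ha hb hc hab'.le hbc')
    · refine .inr ⟨det_eq_zero_trans hb hab' hbc', ?_⟩
      simp only [lamLT] at *
      omega

/-- The number of pairs of steps that have to be moved past each other. -/
def inversions : List Pt → ℕ
  | [] => 0
  | u :: w => w.countP (fun v => Descends u v) + inversions w

/-- The quantity that decreases under cutting and pushing at a descent. -/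
def complexity (w : List Pt) : ℕ ×ₗ ℕ := toLex (w.length, inversions w)

theorem complexity_lt_of_length_lt {w w' : List Pt} (h : w.length < w'.length) :
    complexity w < complexity w' :=
  Prod.Lex.toLex_lt_toLex.2 (.inl h)

theorem inversions_swap_lt {u v : Pt} (h : Descends u v) (l r : List Pt) :
    inversions (l ++ v :: u :: r) < inversions (l ++ u :: v :: r) := by
  induction l with
  | nil =>
    simp only [List.nil_append, inversions, List.countP_cons, h, h.asymm, decide_true,
      decide_false, Bool.false_eq_true, if_true, if_false]
    omega
  | cons a l ih =>
    have hperm : (l ++ v :: u :: r).Perm (l ++ u :: v :: r) :=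
      (List.Perm.swap _ _ _).append_left _
    simp only [List.cons_append, inversions, hperm.countP_eq]
    omega

theorem complexity_swap_lt {u v : Pt} (h : Descends u v) (l r : List Pt) :
    complexity (l ++ v :: u :: r) < complexity (l ++ u :: v :: r) := by
  refine Prod.Lex.toLex_lt_toLex.2 (.inr ⟨?_, inversions_swap_lt h l r⟩)
  simp only [List.length_append, List.length_cons]

/-! ### The exchange relation -/

/-- The recursion at the corner of the steps `u, v` of the path with steps `l, u, v, r`. Read as
`[u] [v] - [v] [u] = -det u v • [u + v]`, it is the relation of a Lie algebra. -/
def Exchange (G : List Pt → ℤ) (l : List Pt) (u v : Pt) (r : List Pt) : Prop :=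
  G (l ++ u :: v :: r) = G (l ++ v :: u :: r) - det u v * G (l ++ (u + v) :: r)

section Exchange

variable {G : List Pt → ℤ}

theorem exchange_self (l : List Pt) (u : Pt) (r : List Pt) : Exchange G l u u r := by
  simp only [Exchange, det]; ring

theorem Exchange.symm {l r : List Pt} {u v : Pt} (h : Exchange G l u v r) :
    Exchange G l v u r := by
  rw [Exchange] at h ⊢
  rw [add_comm v u, det_swap u v]
  linear_combination -h

theorem exchange_iff_of_disjoint {l m r : List Pt} {a b x y : Pt}
    (hba : Exchange G (l ++ b :: a :: m) x y r) (hab : Exchange G (l ++ (a + b) :: m) x y r)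
    (hyx : Exchange G l a b (m ++ y :: x :: r)) (hxy : Exchange G l a b (m ++ (x + y) :: r)) :
    Exchange G l a b (m ++ x :: y :: r) ↔ Exchange G (l ++ a :: b :: m) x y r := by
  simp only [Exchange, List.append_assoc, List.cons_append] at *
  rw [hba, hab, hyx, hxy]
  constructor <;> intro h <;> linear_combination h

/-- Both sides straighten `a b c` to `c b a`; they agree by the Jacobi identity. -/
theorem exchange_iff_of_consecutive {l r : List Pt} {a b c : Pt}
    (hac : Exchange G (l ++ [b]) a c r) (hbc : Exchange G l b c (a :: r))
    (hab_c : Exchange G l (a + b) c r)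
    (hac' : Exchange G l a c (b :: r)) (hab : Exchange G (l ++ [c]) a b r)
    (ha_bc : Exchange G l a (b + c) r)
    (hb_ac : Exchange G l b (a + c) r) :
    Exchange G l a b (c :: r) ↔ Exchange G (l ++ [a]) b c r := by
  have hsum₁ : a + b + c = a + (b + c) := add_assoc a b c
  have hsum₂ : b + (a + c) = a + (b + c) := add_left_comm b a c
  simp only [Exchange, List.append_assoc, List.cons_append, List.nil_append, det_add_left,
    det_add_right, hsum₁, hsum₂, det_swap a b] at *
  constructor <;> intro h
  · linear_combination h + hac + hbc - det a b * hab_c - hac' - hab + det b c * ha_bc -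
      det a c * hb_ac
  · linear_combination h - hac - hbc + det a b * hab_c + hac' + hab - det b c * ha_bc +
      det a c * hb_ac

end Exchange

section Confluence

variable {G : List Pt → ℤ}

/-- Exchange holds at all corners for which both paths with that corner, in either order of
the two steps, have complexity below `c`. This is the induction hypothesis of the confluence
argument. -/
def ExchangeBelow (G : List Pt → ℤ) (c : ℕ ×ₗ ℕ) : Prop :=
  ∀ l u v r, (∀ x ∈ l ++ u :: v :: r, LamPos x) → complexity (l ++ u :: v :: r) < c →
    complexity (l ++ v :: u :: r) < c → Exchange G l u v r

theorem ExchangeBelow.iff_of_disjoint {l m r : List Pt} {a b x y : Pt}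
    (hw : ∀ z ∈ l ++ a :: b :: (m ++ x :: y :: r), LamPos z)
    (h : ExchangeBelow G (complexity (l ++ a :: b :: (m ++ x :: y :: r))))
    (hab : Descends a b) (hxy : Descends x y) :
    Exchange G l a b (m ++ x :: y :: r) ↔ Exchange G (l ++ a :: b :: m) x y r := by
  have hbaxy := complexity_swap_lt hab l (m ++ x :: y :: r)
  have habyx := complexity_swap_lt hxy (l ++ a :: b :: m) r
  have hbayx := complexity_swap_lt hxy (l ++ b :: a :: m) r
  simp only [List.append_assoc, List.cons_append] at habyx hbayx
  simp only [List.forall_mem_append, List.forall_mem_cons] at hw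
  obtain ⟨hl, ha, hb, hm, hx, hy, hr⟩ := hw
  have hab' := ha.add hb
  have hxy' := hx.add hy
  refine exchange_iff_of_disjoint (h _ _ _ _ ?_ ?_ ?_) (h _ _ _ _ ?_ ?_ ?_)
    (h _ _ _ _ ?_ ?_ ?_) (h _ _ _ _ ?_ ?_ ?_)
  all_goals
    try simp only [List.forall_mem_append, List.forall_mem_cons, List.append_assoc,
      List.cons_append]
    first
    | tauto
    | exact hbayx.trans hbaxy
    | exact complexity_lt_of_length_lt (by simp)

theorem ExchangeBelow.iff_of_consecutive {l r : List Pt} {a b c : Pt}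
    (hw : ∀ z ∈ l ++ a :: b :: c :: r, LamPos z)
    (h : ExchangeBelow G (complexity (l ++ a :: b :: c :: r)))
    (hab : Descends a b) (hbc : Descends b c) :
    Exchange G l a b (c :: r) ↔ Exchange G (l ++ [a]) b c r := by
  simp only [List.forall_mem_append, List.forall_mem_cons] at hw
  obtain ⟨hl, ha, hb, hc, hr⟩ := hw
  have hac : Descends a c := hab.trans ha hb hc hbc
  have hbac := complexity_swap_lt hab l (c :: r)
  have hacb := complexity_swap_lt hbc (l ++ [a]) r
  have hbca := complexity_swap_lt hac (l ++ [b]) r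
  have hcab := complexity_swap_lt hac l (b :: r)
  have hcba := complexity_swap_lt hab (l ++ [c]) r
  simp only [List.append_assoc, List.cons_append, List.nil_append] at hacb hbca hcba
  have hab' := ha.add hb
  have hac' := ha.add hc
  have hbc' := hb.add hc
  refine exchange_iff_of_consecutive (h _ _ _ _ ?_ ?_ ?_) (h _ _ _ _ ?_ ?_ ?_)
    (h _ _ _ _ ?_ ?_ ?_) (h _ _ _ _ ?_ ?_ ?_) (h _ _ _ _ ?_ ?_ ?_) (h _ _ _ _ ?_ ?_ ?_)
    (h _ _ _ _ ?_ ?_ ?_)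
  all_goals
    try simp only [List.forall_mem_append, List.forall_mem_cons, List.append_assoc,
      List.cons_append, List.nil_append]
    first
    | tauto
    | order
    | exact complexity_lt_of_length_lt (by simp)

theorem append_cons_cons_eq_cases {α : Type*} {l l' r r' : List α} {u v x y : α}
    (h : l ++ u :: v :: r = l' ++ x :: y :: r') (hle : l.length ≤ l'.length) :
    (l = l' ∧ u = x ∧ v = y ∧ r = r') ∨ (l' = l ++ [u] ∧ v = x ∧ r = y :: r') ∨
      ∃ m, l' = l ++ u :: v :: m ∧ r = m ++ x :: y :: r' := by
  obtain ⟨m, rfl⟩ : l <+: l' :=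
    List.prefix_of_prefix_length_le (List.prefix_append _ _) ⟨_, h.symm⟩ hle
  rw [List.append_assoc, List.append_cancel_left_eq] at h
  match m with
  | [] => simp_all
  | [_] => simp_all
  | _ :: _ :: m => exact .inr (.inr ⟨m, by simp_all⟩)

theorem ExchangeBelow.iff {l l' r r' : List Pt} {u v x y : Pt}
    (h : ExchangeBelow G (complexity (l ++ u :: v :: r)))
    (hw : ∀ z ∈ l ++ u :: v :: r, LamPos z) (huv : Descends u v) (hxy : Descends x y)
    (heq : l ++ u :: v :: r = l' ++ x :: y :: r') :
    Exchange G l u v r ↔ Exchange G l' x y r' := by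
  wlog hle : l.length ≤ l'.length generalizing l l' r r' u v x y
  · exact (this (heq ▸ h) (heq ▸ hw) hxy huv heq.symm (le_of_not_ge hle)).symm
  · obtain ⟨rfl, rfl, rfl, rfl⟩ | ⟨rfl, rfl, rfl⟩ | ⟨m, rfl, rfl⟩ :=
      append_cons_cons_eq_cases heq hle
    · rfl
    · exact h.iff_of_consecutive hw huv hxy
    · exact h.iff_of_disjoint hw huv hxy

/-- The steps never turn right. -/
def TurnFree (w : List Pt) : Prop := w.IsChain fun u v => 0 ≤ det u v

theorem TurnFree.swap {l r : List Pt} {u v : Pt} (h : TurnFree (l ++ u :: v :: r))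
    (hw : ∀ x ∈ l ++ u :: v :: r, LamPos x) (huv : det u v = 0) :
    TurnFree (l ++ v :: u :: r) := by
  have hvu : det v u = 0 := by rw [det_swap, huv, neg_zero]
  simp only [List.forall_mem_append, List.forall_mem_cons] at hw
  obtain ⟨hl, hu, hv, hr⟩ := hw
  simp only [TurnFree, List.isChain_append, List.isChain_cons, List.head?_cons,
    Option.mem_some_iff, forall_eq'] at h ⊢
  obtain ⟨hchain, ⟨-, hvr, hchain'⟩, hlu⟩ := h
  refine ⟨hchain, ⟨hvu.ge, fun c hc => ?_, hchain'⟩, fun a ha => ?_⟩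
  · by_contra! huc
    exact (hvr c hc).not_gt (det_neg_of_nonpos_of_neg hv hu (hr c (List.mem_of_mem_head? hc))
      hvu.le huc)
  · by_contra! hav
    exact (hlu a ha).not_gt (det_neg_of_neg_of_nonpos (hl a (List.mem_of_mem_getLast? ha)) hv hu
      hav hvu.le)

/-- By induction on the complexity, the exchanges at the descents of a path are all equivalent, so
that one of them suffices. -/
theorem exchange_of_exists_turn
    (hturn : ∀ w, (∀ x ∈ w, LamPos x) → ¬TurnFree w →
      ∃ l u v r, w = l ++ u :: v :: r ∧ det u v < 0 ∧ Exchange G l u v r)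
    (hflat : ∀ l u v r, (∀ x ∈ l ++ u :: v :: r, LamPos x) → TurnFree (l ++ u :: v :: r) →
      det u v = 0 → Exchange G l u v r)
    (l : List Pt) (u v : Pt) (r : List Pt) (hw : ∀ x ∈ l ++ u :: v :: r, LamPos x)
    (huv : Descends u v) : Exchange G l u v r := by
  induction hc : complexity (l ++ u :: v :: r) using WellFoundedLT.induction
    generalizing l u v r with
  | ind c ih =>
    subst hc
    have hbelow : ExchangeBelow G (complexity (l ++ u :: v :: r)) := by
      intro l' a b r' hw' hab hba
      obtain h | rfl | h := descends_trichotomous a b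
      · exact ih _ hab l' a b r' hw' h rfl
      · exact exchange_self l' a r'
      · refine (ih _ hba l' b a r' (fun x hx => hw' x ?_) h rfl).symm
        simpa only [List.mem_append, List.mem_cons, or_left_comm] using hx
    by_cases hfree : TurnFree (l ++ u :: v :: r)
    · refine hflat l u v r hw hfree (huv.det_nonpos.antisymm ?_)
      exact List.isChain_iff_forall_rel_of_append_cons_cons.1 hfree rfl
    · obtain ⟨l', x, y, r', heq, hxy, hexch⟩ := hturn _ hw hfree
      exact (hbelow.iff hw huv (.inl hxy) heq).2 hexch

end Confluence

/-! ### Paths and their steps -/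

theorem exists_eq_pathFrom {γ : List Pt} (h : γ ≠ []) : ∃ p w, γ = pathFrom p w := by
  induction γ with
  | nil => exact absurd rfl h
  | cons a γ ih =>
    cases γ with
    | nil => exact ⟨a, [], rfl⟩
    | cons b γ =>
      obtain ⟨p, w, hw⟩ := ih (List.cons_ne_nil b γ)
      exact ⟨a, (p - a) :: w, by rw [pathFrom, add_sub_cancel, hw]⟩

theorem length_pathFrom (p : Pt) (w : List Pt) : (pathFrom p w).length = w.length + 1 := by
  induction w generalizing p with
  | nil => rfl
  | cons v w ih => simp only [pathFrom, List.length_cons, ih]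

theorem pathFrom_append_cons (p : Pt) (l : List Pt) (x : Pt) (r : List Pt) :
    pathFrom p (l ++ x :: r) = pathFrom p l ++ pathFrom (p + l.sum + x) r := by
  induction l generalizing p with
  | nil => simp [pathFrom]
  | cons a l ih => simp [pathFrom, ih, add_assoc]

theorem pt_pathFrom_append (p : Pt) (l m : List Pt) (i : ℕ) :
    pt (pathFrom p (l ++ m)) (l.length + i) = pt (pathFrom (p + l.sum) m) i := by
  induction l generalizing p with
  | nil => simp
  | cons a l ih =>
    rw [List.length_cons, add_right_comm, List.sum_cons, ← add_assoc, ← ih (p + a)]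
    rfl

section Corner

variable (p : Pt) (l : List Pt) (u v : Pt) (r : List Pt)

theorem pt_corner_pred : pt (pathFrom p (l ++ u :: v :: r)) l.length = p + l.sum :=
  pt_pathFrom_append p l _ 0

theorem pt_corner : pt (pathFrom p (l ++ u :: v :: r)) (l.length + 1) = p + l.sum + u :=
  pt_pathFrom_append p l _ 1

theorem pt_corner_succ :
    pt (pathFrom p (l ++ u :: v :: r)) (l.length + 1 + 1) = p + l.sum + u + v := by
  rw [add_assoc, pt_pathFrom_append]
  cases r <;> rfl

theorem turnAt_corner_iff {s : ℤ → Prop} :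
    TurnAt s (pathFrom p (l ++ u :: v :: r)) (l.length + 1) ↔ s (det u v) := by
  simp only [TurnAt, length_pathFrom, add_tsub_cancel_right, pt_corner_pred, pt_corner,
    pt_corner_succ, add_sub_cancel_left, List.length_append, List.length_cons]
  exact ⟨fun h => h.2.2, fun h => ⟨by omega, by omega, h⟩⟩

theorem triArea2_corner :
    triArea2 (pathFrom p (l ++ u :: v :: r)) (l.length + 1) = (det u v).natAbs := by
  simp only [triArea2, add_tsub_cancel_right, pt_corner_pred, pt_corner, pt_corner_succ,
    add_sub_cancel_left]

theorem cut_corner :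
    cut (pathFrom p (l ++ u :: v :: r)) (l.length + 1) = pathFrom p (l ++ (u + v) :: r) := by
  induction l generalizing p with
  | nil => simp [cut, pathFrom, add_assoc]
  | cons a l ih => simpa [cut, pathFrom] using ih (p + a)

theorem set_corner :
    (pathFrom p (l ++ u :: v :: r)).set (l.length + 1) (p + l.sum + v) =
      pathFrom p (l ++ v :: u :: r) := by
  induction l generalizing p with
  | nil => simp [pathFrom, add_right_comm]
  | cons a l ih => simpa [pathFrom, add_assoc] using ih (p + a)

theorem push_corner :
    push (pathFrom p (l ++ u :: v :: r)) (l.length + 1) = pathFrom p (l ++ v :: u :: r) := by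
  have hv : p + l.sum + (p + l.sum + u + v) - (p + l.sum + u) = p + l.sum + v := by abel
  rw [push, add_tsub_cancel_right, pt_corner_pred, pt_corner, pt_corner_succ, hv, set_corner]

end Corner

theorem turnAt_pathFrom_iff {s : ℤ → Prop} {p : Pt} {w : List Pt} {k : ℕ} :
    TurnAt s (pathFrom p w) k ↔
      ∃ l u v r, w = l ++ u :: v :: r ∧ k = l.length + 1 ∧ s (det u v) := by
  constructor
  · intro h
    obtain ⟨hk, hlen, -⟩ := id h
    rw [length_pathFrom] at hlen
    obtain ⟨k, rfl⟩ := Nat.exists_eq_succ_of_ne_zero hk.ne'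
    have hw : w = w.take k ++ w[k] :: w[k + 1] :: w.drop (k + 2) := by
      rw [List.cons_getElem_drop_succ, List.cons_getElem_drop_succ, List.take_append_drop]
    have hlen' : (w.take k).length = k := List.length_take_of_le (by omega)
    refine ⟨_, _, _, _, hw, by rw [hlen'], ?_⟩
    rw [← turnAt_corner_iff p (s := s), ← hw, hlen']
    exact h
  · rintro ⟨l, u, v, r, rfl, rfl, h⟩
    exact (turnAt_corner_iff p l u v r).2 h

theorem TurnAt.exists_corner {s : ℤ → Prop} {γ : List Pt} {k : ℕ} (h : TurnAt s γ k) :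
    ∃ p l u v r, γ = pathFrom p (l ++ u :: v :: r) ∧ k = l.length + 1 ∧ s (det u v) := by
  have hne : γ ≠ [] := List.ne_nil_of_length_pos (pos_of_gt h.2.1)
  obtain ⟨p, w, rfl⟩ := exists_eq_pathFrom hne
  obtain ⟨l, u, v, r, rfl, hl, huv⟩ := turnAt_pathFrom_iff.1 h
  exact ⟨p, l, u, v, r, rfl, hl, huv⟩

theorem turnFree_iff_forall_not_turnAt {p : Pt} {w : List Pt} :
    TurnFree w ↔ ∀ k, ¬TurnAt (· < 0) (pathFrom p w) k := by
  rw [TurnFree, List.isChain_iff_forall_rel_of_append_cons_cons]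
  constructor
  · rintro h k hk
    obtain ⟨l, u, v, r, hw, -, huv⟩ := turnAt_pathFrom_iff.1 hk
    exact huv.not_ge (h hw)
  · intro h u v l r hw
    by_contra! huv
    exact h _ (turnAt_pathFrom_iff.2 ⟨l, u, v, r, hw, rfl, huv⟩)

theorem increasing_pathFrom_iff {p : Pt} {w : List Pt} :
    Increasing (pathFrom p w) ↔ ∀ v ∈ w, LamPos v := by
  induction w generalizing p with
  | nil => exact iff_of_true (List.isChain_singleton p) (List.forall_mem_nil _)
  | cons v w ih =>
    have hcons : Increasing (p :: pathFrom (p + v) w) ↔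
        lamLT p (p + v) ∧ Increasing (pathFrom (p + v) w) := by
      cases w <;> exact List.isChain_cons_cons
    rw [pathFrom, hcons, ih, List.forall_mem_cons, ← lamPos_sub_iff, add_sub_cancel_left]

theorem increasing_cut {γ : List Pt} {k : ℕ} {s : ℤ → Prop} (hγ : Increasing γ)
    (hk : TurnAt s γ k) : Increasing (cut γ k) := by
  obtain ⟨p, l, u, v, r, rfl, rfl, -⟩ := hk.exists_corner
  rw [cut_corner]
  rw [increasing_pathFrom_iff] at hγ ⊢
  simp only [List.forall_mem_append, List.forall_mem_cons] at hγ ⊢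
  exact ⟨hγ.1, hγ.2.1.add hγ.2.2.1, hγ.2.2.2⟩

theorem increasing_push {γ : List Pt} {k : ℕ} {s : ℤ → Prop} (hγ : Increasing γ)
    (hk : TurnAt s γ k) : Increasing (push γ k) := by
  obtain ⟨p, l, u, v, r, rfl, rfl, -⟩ := hk.exists_corner
  rw [push_corner]
  rw [increasing_pathFrom_iff] at hγ ⊢
  simp only [List.forall_mem_append, List.forall_mem_cons] at hγ ⊢
  tauto

theorem lamPos_corner {p : Pt} {l r : List Pt} {u v : Pt}
    (h : Increasing (pathFrom p (l ++ u :: v :: r))) : LamPos u ∧ LamPos v := by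
  rw [increasing_pathFrom_iff] at h
  exact ⟨h u (by simp), h v (by simp)⟩

theorem mem_pathFrom (p : Pt) (w : List Pt) : p ∈ pathFrom p w := by
  cases w <;> simp [pathFrom]

theorem add_sum_mem_pathFrom (p : Pt) (w : List Pt) : p + w.sum ∈ pathFrom p w := by
  induction w generalizing p with
  | nil => simp [pathFrom]
  | cons v w ih =>
    rw [List.sum_cons, ← add_assoc]
    exact List.mem_cons_of_mem _ (ih _)

theorem inside_pathFrom_append_cons {Δ : Set Pt} {p : Pt} {l : List Pt} {x : Pt} {r : List Pt} :
    Inside Δ (pathFrom p (l ++ x :: r)) ↔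
      Inside Δ (pathFrom p l) ∧ Inside Δ (pathFrom (p + l.sum + x) r) := by
  rw [pathFrom_append_cons]
  exact List.forall_mem_append

theorem inside_corner_iff {Δ : Set Pt} {p : Pt} {l : List Pt} {u v : Pt} {r : List Pt} :
    Inside Δ (pathFrom p (l ++ u :: v :: r)) ↔ Inside Δ (pathFrom p l) ∧
      p + l.sum + u ∈ Δ ∧ Inside Δ (pathFrom (p + l.sum + u + v) r) := by
  rw [inside_pathFrom_append_cons]
  exact and_congr_right' List.forall_mem_cons

theorem inside_univ (γ : List Pt) : Inside Set.univ γ :=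
  fun z _ => Set.mem_univ z

theorem inside_cut {Δ : Set Pt} {γ : List Pt} (hγ : Inside Δ γ) (k : ℕ) :
    Inside Δ (cut γ k) :=
  fun z hz => hγ z (List.mem_of_mem_eraseIdx hz)

theorem inside_cut_of_inside_push {Δ : Set Pt} {γ : List Pt} {k : ℕ}
    (h : Inside Δ (push γ k)) : Inside Δ (cut γ k) := by
  have hcut : cut (push γ k) k = cut γ k := List.eraseIdx_set_eq
  exact hcut ▸ inside_cut h k

/-! ### The multiplicity recursion -/

section MultOf

variable {Δ : Set Pt} {Init : List Pt → Prop} {s : ℤ → Prop} {γ : List Pt}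

theorem FirstTurn.unique {k k' : ℕ} (h : FirstTurn s γ k) (h' : FirstTurn s γ k') : k = k' :=
  le_antisymm (h.2 _ h'.1) (h'.2 _ h.1)

theorem TurnAt.exists_firstTurn {k : ℕ} (h : TurnAt s γ k) : ∃ j, FirstTurn s γ j :=
  have hex : ∃ k, TurnAt s γ k := ⟨k, h⟩
  ⟨Nat.find hex, Nat.find_spec hex, fun _ => Nat.find_min' hex⟩

theorem MultRel.unique {m m' : ℕ} (h : MultRel Δ Init s γ m) (h' : MultRel Δ Init s γ m') :
    m = m' := by
  induction h generalizing m' with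
  | init hinit => cases h' <;> first | rfl | contradiction
  | noTurn hinit hturn =>
    cases h' with
    | init => contradiction
    | noTurn => rfl
    | stepIn _ hk | stepOut _ hk => exact absurd hk.1 (hturn _)
  | stepIn hinit hk hin _ _ ihcut ihpush =>
    cases h' with
    | init => contradiction
    | noTurn _ hturn => exact absurd hk.1 (hturn _)
    | stepIn _ hk' _ hcut hpush =>
      obtain rfl := hk.unique hk'
      rw [ihcut hcut, ihpush hpush]
    | stepOut _ hk' hout =>
      obtain rfl := hk.unique hk'
      contradiction
  | stepOut hinit hk hout _ ihcut =>
    cases h' with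
    | init => contradiction
    | noTurn _ hturn => exact absurd hk.1 (hturn _)
    | stepIn _ hk' hin =>
      obtain rfl := hk.unique hk'
      contradiction
    | stepOut _ hk' _ hcut =>
      obtain rfl := hk.unique hk'
      rw [ihcut hcut]

theorem MultRel.multOf_eq {m : ℕ} (h : MultRel Δ Init s γ m) : multOf Δ Init s γ = m := by
  have hex : ∃ m, MultRel Δ Init s γ m := ⟨m, h⟩
  rw [multOf, dif_pos hex]
  exact hex.choose_spec.unique h

theorem exists_multRel_pathFrom (Δ : Set Pt) (Init : List Pt → Prop) (p : Pt) (w : List Pt) :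
    ∃ m, MultRel Δ Init (· < 0) (pathFrom p w) m := by
  induction hc : complexity w using WellFoundedLT.induction generalizing w with
  | ind c ih =>
    subst hc
    by_cases hinit : Init (pathFrom p w)
    · exact ⟨1, .init hinit⟩
    by_cases hturn : ∃ k, TurnAt (· < 0) (pathFrom p w) k
    · obtain ⟨k, hk⟩ := hturn.choose_spec.exists_firstTurn
      obtain ⟨l, u, v, r, rfl, rfl, huv⟩ := turnAt_pathFrom_iff.1 hk.1
      obtain ⟨m', hcut⟩ := ih _ (complexity_lt_of_length_lt (by simp)) (l ++ (u + v) :: r) rfl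
      obtain ⟨m'', hpush⟩ := ih _ (complexity_swap_lt (.inl huv) l r) _ rfl
      rw [← cut_corner] at hcut
      rw [← push_corner] at hpush
      by_cases hin : Inside Δ (push (pathFrom p (l ++ u :: v :: r)) (l.length + 1))
      · exact ⟨_, .stepIn hinit hk hin hcut hpush⟩
      · exact ⟨_, .stepOut hinit hk hin hcut⟩
    · exact ⟨0, .noTurn hinit (not_exists.1 hturn)⟩

theorem multRel_multOf (Δ : Set Pt) (Init : List Pt → Prop) (γ : List Pt) :
    MultRel Δ Init (· < 0) γ (multOf Δ Init (· < 0) γ) := by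
  obtain ⟨m, hm⟩ : ∃ m, MultRel Δ Init (· < 0) γ m := by
    rcases eq_or_ne γ [] with rfl | hγ
    · by_cases hinit : Init []
      · exact ⟨1, .init hinit⟩
      · exact ⟨0, .noTurn hinit fun k hk => absurd hk.2.1 (by simp)⟩
    · obtain ⟨p, w, rfl⟩ := exists_eq_pathFrom hγ
      exact exists_multRel_pathFrom Δ Init p w
  rwa [hm.multOf_eq]

theorem multOf_of_init (h : Init γ) : multOf Δ Init s γ = 1 :=
  (MultRel.init h).multOf_eq

theorem multOf_of_forall_not_turnAt (hinit : ¬Init γ) (hturn : ∀ k, ¬TurnAt s γ k) :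
    multOf Δ Init s γ = 0 :=
  (MultRel.noTurn hinit hturn).multOf_eq

theorem multOf_of_firstTurn {k : ℕ} (hinit : ¬Init γ) (hk : FirstTurn (· < 0) γ k) :
    multOf Δ Init (· < 0) γ = triArea2 γ k * multOf Δ Init (· < 0) (cut γ k) +
      (if Inside Δ (push γ k) then multOf Δ Init (· < 0) (push γ k) else 0) := by
  split_ifs with hin
  · exact (MultRel.stepIn hinit hk hin (multRel_multOf ..) (multRel_multOf ..)).multOf_eq
  · exact (MultRel.stepOut hinit hk hin (multRel_multOf ..)).multOf_eq

end MultOf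

/-! ### Paths in the whole plane -/

/-- The properties of the set of `β₋`-initial paths in `Δ` on which the independence of the
recursion rests. -/
structure IsInitialFamily (Δ : Set Pt) (Init : List Pt → Prop) : Prop where
  inside {γ : List Pt} : Init γ → Inside Δ γ
  not_turnAt {γ : List Pt} {k : ℕ} : Init γ → ¬TurnAt (· < 0) γ k
  init_push {γ : List Pt} {k : ℕ} : Init γ → TurnAt (· = 0) γ k → Init (push γ k)

section Plane

variable {Δ : Set Pt} {Init : List Pt → Prop}

/-- The multiplicity of the path with steps `w` from `p`, without a constraining polygon. -/
def planeMult (Init : List Pt → Prop) (p : Pt) (w : List Pt) : ℤ :=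
  multOf Set.univ Init (· < 0) (pathFrom p w)

theorem exchange_planeMult_iff {p : Pt} {l r : List Pt} {u v : Pt} (huv : det u v < 0) :
    Exchange (planeMult Init p) l u v r ↔
      multOf Set.univ Init (· < 0) (pathFrom p (l ++ u :: v :: r)) =
        triArea2 (pathFrom p (l ++ u :: v :: r)) (l.length + 1) *
          multOf Set.univ Init (· < 0) (cut (pathFrom p (l ++ u :: v :: r)) (l.length + 1)) +
        multOf Set.univ Init (· < 0) (push (pathFrom p (l ++ u :: v :: r)) (l.length + 1)) := by
  rw [cut_corner, push_corner, triArea2_corner, Exchange, ← Nat.cast_inj (R := ℤ), Nat.cast_add,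
    Nat.cast_mul, Int.natCast_natAbs, abs_of_neg huv, neg_mul, neg_add_eq_sub]
  rfl

theorem IsInitialFamily.exists_turn_exchange (hInit : IsInitialFamily Δ Init) {p : Pt}
    {w : List Pt} (hw : ¬TurnFree w) :
    ∃ l u v r, w = l ++ u :: v :: r ∧ det u v < 0 ∧ Exchange (planeMult Init p) l u v r := by
  rw [turnFree_iff_forall_not_turnAt (p := p), Classical.not_forall_not] at hw
  obtain ⟨k, hk⟩ := hw.choose_spec.exists_firstTurn
  have hrec := multOf_of_firstTurn (Δ := Set.univ) (fun h => hInit.not_turnAt h hk.1) hk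
  rw [if_pos (inside_univ _)] at hrec
  obtain ⟨l, u, v, r, rfl, rfl, huv⟩ := turnAt_pathFrom_iff.1 hk.1
  exact ⟨l, u, v, r, rfl, huv, (exchange_planeMult_iff huv).2 hrec⟩

theorem IsInitialFamily.swap (hInit : IsInitialFamily Δ Init) {p : Pt} {l r : List Pt}
    {u v : Pt} (huv : det u v = 0) (h : Init (pathFrom p (l ++ u :: v :: r))) :
    Init (pathFrom p (l ++ v :: u :: r)) := by
  rw [← push_corner]
  exact hInit.init_push h ((turnAt_corner_iff p l u v r).2 huv)

theorem planeMult_of_turnFree {p : Pt} {w : List Pt} (h : TurnFree w) :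
    planeMult Init p w = if Init (pathFrom p w) then 1 else 0 := by
  split_ifs with hinit
  · exact congrArg Nat.cast (multOf_of_init hinit)
  · exact congrArg Nat.cast
      (multOf_of_forall_not_turnAt hinit (turnFree_iff_forall_not_turnAt.1 h))

theorem IsInitialFamily.exchange_of_turnFree (hInit : IsInitialFamily Δ Init) {p : Pt}
    {l r : List Pt} {u v : Pt} (hw : ∀ x ∈ l ++ u :: v :: r, LamPos x)
    (hfree : TurnFree (l ++ u :: v :: r)) (huv : det u v = 0) :
    Exchange (planeMult Init p) l u v r := by
  have hiff : Init (pathFrom p (l ++ u :: v :: r)) ↔ Init (pathFrom p (l ++ v :: u :: r)) :=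
    ⟨hInit.swap huv, hInit.swap (by rw [det_swap, huv, neg_zero])⟩
  rw [Exchange, huv, zero_mul, sub_zero, planeMult_of_turnFree hfree,
    planeMult_of_turnFree (hfree.swap hw huv), hiff]

theorem IsInitialFamily.multOf_univ_eq (hInit : IsInitialFamily Δ Init) {γ : List Pt} {k : ℕ}
    (hγ : Increasing γ) (hk : TurnAt (· < 0) γ k) :
    multOf Set.univ Init (· < 0) γ =
      triArea2 γ k * multOf Set.univ Init (· < 0) (cut γ k) +
        multOf Set.univ Init (· < 0) (push γ k) := by
  obtain ⟨p, l, u, v, r, rfl, rfl, huv⟩ := hk.exists_corner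
  refine (exchange_planeMult_iff huv).1 ?_
  exact exchange_of_exists_turn (fun w _ => hInit.exists_turn_exchange)
    (fun _ _ _ _ => hInit.exchange_of_turnFree) l u v r (increasing_pathFrom_iff.1 hγ) (.inl huv)

end Plane

/-! ### Convex regions -/

theorem toR_add (u v : Pt) : toR (u + v) = toR u + toR v := by
  simp only [toR, Prod.fst_add, Prod.snd_add, Int.cast_add, Prod.mk_add_mk]

theorem fst_mul_dual_sub (f : StrongDual ℝ (ℝ × ℝ)) (u v : Pt) :
    u.1 * f (toR v) - v.1 * f (toR u) = det u v * f (0, 1) := by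
  have hf : ∀ z : Pt, f (toR z) = z.1 * f (1, 0) + z.2 * f (0, 1) := fun z => by
    rw [← smul_eq_mul, ← smul_eq_mul, ← map_smul, ← map_smul, ← map_add]
    simp [toR]
  rw [hf, hf, det]
  push_cast
  ring

/-- The lattice points of the half-plane `c ≤ f`, a convex region bounded from below by the line
`f = c` when `0 < f (0, 1)`. -/
def halfPlane (f : StrongDual ℝ (ℝ × ℝ)) (c : ℝ) : Set Pt := {z | c ≤ f (toR z)}

section HalfPlane

variable {f : StrongDual ℝ (ℝ × ℝ)} {c : ℝ} {Init : List Pt → Prop} {γ : List Pt}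

/-- A right turn lies above the chord that cuts it off. -/
theorem inside_halfPlane_of_inside_cut (hf : 0 < f (0, 1)) {k : ℕ} (hγ : Increasing γ)
    (hk : TurnAt (· < 0) γ k) (hcut : Inside (halfPlane f c) (cut γ k)) :
    Inside (halfPlane f c) γ := by
  obtain ⟨p, l, u, v, r, rfl, rfl, huv⟩ := hk.exists_corner
  obtain ⟨hu, hv⟩ := lamPos_corner hγ
  rw [cut_corner, inside_pathFrom_append_cons] at hcut
  rw [inside_corner_iff, add_assoc _ u v]
  refine ⟨hcut.1, ?_, hcut.2⟩
  have hP : c ≤ f (toR (p + l.sum)) := hcut.1 _ (add_sum_mem_pathFrom p l)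
  have hR : c ≤ f (toR (p + l.sum + (u + v))) := hcut.2 _ (mem_pathFrom _ r)
  simp only [halfPlane, Set.mem_ofPred_eq, toR_add, map_add] at hP hR ⊢
  by_contra! hQ
  have hfu : f (toR u) < 0 := by linarith
  have hfv : 0 < f (toR v) := by linarith
  have hu₁ : (0 : ℝ) < u.1 := mod_cast hu.fst_pos_of_det_neg hv huv
  have hv₁ : (0 : ℝ) ≤ v.1 := mod_cast hv.fst_nonneg
  have huv' : (det u v : ℝ) < 0 := mod_cast huv
  linarith [fst_mul_dual_sub f u v, mul_pos hu₁ hfv,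
    mul_nonpos_of_nonneg_of_nonpos hv₁ hfu.le, mul_neg_of_neg_of_pos huv' hf]

theorem multOf_univ_eq_zero_of_not_inside_halfPlane (hf : 0 < f (0, 1))
    (hInit : ∀ δ, Init δ → Inside (halfPlane f c) δ) (hγ : Increasing γ)
    (hout : ¬Inside (halfPlane f c) γ) : multOf Set.univ Init (· < 0) γ = 0 := by
  have hrel := multRel_multOf Set.univ Init γ
  generalize multOf Set.univ Init (· < 0) γ = m at hrel ⊢
  induction hrel with
  | init h => exact absurd (hInit _ h) hout
  | noTurn => rfl
  | stepIn _ hk _ _ _ ihcut ihpush =>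
    rw [ihcut (increasing_cut hγ hk.1) (mt (inside_halfPlane_of_inside_cut hf hγ hk.1) hout),
      ihpush (increasing_push hγ hk.1) (fun h => hout
        (inside_halfPlane_of_inside_cut hf hγ hk.1 (inside_cut_of_inside_push h))), mul_zero]
  | stepOut _ _ hnot => exact absurd (inside_univ _) hnot

end HalfPlane

section Convex

variable {K : Set (ℝ × ℝ)} {Init : List Pt → Prop} {γ : List Pt} {k : ℕ}

/-- A path pushed out of a convex region leaves it through its lower boundary. -/
theorem exists_halfPlane_of_not_inside_push (hK : Convex ℝ K) (hK' : IsClosed K)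
    (hγ : Increasing γ) (hin : Inside (toR ⁻¹' K) γ) (hk : TurnAt (· < 0) γ k)
    (hout : ¬Inside (toR ⁻¹' K) (push γ k)) :
    ∃ (f : StrongDual ℝ (ℝ × ℝ)) (c : ℝ), 0 < f (0, 1) ∧ toR ⁻¹' K ⊆ halfPlane f c ∧
      ¬Inside (halfPlane f c) (push γ k) := by
  obtain ⟨p, l, u, v, r, rfl, rfl, huv⟩ := hk.exists_corner
  obtain ⟨hu, hv⟩ := lamPos_corner hγ
  rw [inside_corner_iff] at hin
  obtain ⟨hl, -, hr⟩ := hin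
  have hR : p + l.sum + u + v ∈ toR ⁻¹' K := hr _ (mem_pathFrom _ r)
  rw [push_corner, inside_corner_iff, add_right_comm _ v u] at hout
  obtain ⟨f, c, hlt, hgt⟩ := geometric_hahn_banach_point_closed hK hK'
    (show toR (p + l.sum + v) ∉ K from fun h => hout ⟨hl, h, hr⟩)
  refine ⟨f, c, ?_, fun z hz => (hgt _ hz).le, fun h => ?_⟩
  · have hP := hgt _ (hl _ (add_sum_mem_pathFrom p l))
    have hR := hgt _ hR
    simp only [toR_add, map_add] at hlt hP hR
    have hfu : 0 < f (toR u) := by linarith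
    have hfv : f (toR v) < 0 := by linarith
    have hu₁ : (0 : ℝ) < u.1 := mod_cast hu.fst_pos_of_det_neg hv huv
    have hv₁ : (0 : ℝ) ≤ v.1 := mod_cast hv.fst_nonneg
    have huv' : (det u v : ℝ) < 0 := mod_cast huv
    refine pos_of_mul_neg_right ?_ huv'.le
    linarith [fst_mul_dual_sub f u v, mul_neg_of_pos_of_neg hu₁ hfv, mul_nonneg hv₁ hfu.le]
  · rw [push_corner, inside_corner_iff] at h
    exact hlt.not_ge h.2.1

theorem multOf_preimage_eq_multOf_univ (hK : Convex ℝ K) (hK' : IsClosed K)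
    (hInit : IsInitialFamily (toR ⁻¹' K) Init) (hγ : Increasing γ)
    (hin : Inside (toR ⁻¹' K) γ) :
    multOf (toR ⁻¹' K) Init (· < 0) γ = multOf Set.univ Init (· < 0) γ := by
  have hrel := multRel_multOf (toR ⁻¹' K) Init γ
  generalize multOf (toR ⁻¹' K) Init (· < 0) γ = m at hrel ⊢
  induction hrel with
  | init h => exact (multOf_of_init h).symm
  | noTurn h hturn => exact (multOf_of_forall_not_turnAt h hturn).symm
  | stepIn hinit hk hpush _ _ ihcut ihpush =>
    rw [multOf_of_firstTurn hinit hk, if_pos (inside_univ _),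
      ← ihcut (increasing_cut hγ hk.1) (inside_cut hin _),
      ← ihpush (increasing_push hγ hk.1) hpush]
  | stepOut hinit hk hpush _ ihcut =>
    obtain ⟨f, c, hf, hsub, hout⟩ := exists_halfPlane_of_not_inside_push hK hK' hγ hin hk.1 hpush
    rw [multOf_of_firstTurn hinit hk, if_pos (inside_univ _),
      ← ihcut (increasing_cut hγ hk.1) (inside_cut hin _),
      multOf_univ_eq_zero_of_not_inside_halfPlane hf
        (fun δ hδ z hz => hsub (hInit.inside hδ z hz)) (increasing_push hγ hk.1) hout, add_zero]

theorem multMinus_any_right_turn_general (hK : Convex ℝ K) (hK' : IsClosed K)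
    (hInit : IsInitialFamily (toR ⁻¹' K) Init) (hγ : Increasing γ)
    (hin : Inside (toR ⁻¹' K) γ) (hk : TurnAt (· < 0) γ k) :
    multOf (toR ⁻¹' K) Init (· < 0) γ =
      triArea2 γ k * multOf (toR ⁻¹' K) Init (· < 0) (cut γ k) +
        (if Inside (toR ⁻¹' K) (push γ k) then multOf (toR ⁻¹' K) Init (· < 0) (push γ k)
          else 0) := by
  rw [multOf_preimage_eq_multOf_univ hK hK' hInit hγ hin, hInit.multOf_univ_eq hγ hk,
    multOf_preimage_eq_multOf_univ hK hK' hInit (increasing_cut hγ hk) (inside_cut hin k)]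
  split_ifs with hpush
  · rw [multOf_preimage_eq_multOf_univ hK hK' hInit (increasing_push hγ hk) hpush]
  · obtain ⟨f, c, hf, hsub, hout⟩ := exists_halfPlane_of_not_inside_push hK hK' hγ hin hk hpush
    rw [multOf_univ_eq_zero_of_not_inside_halfPlane hf
      (fun δ hδ z hz => hsub (hInit.inside hδ z hz)) (increasing_push hγ hk) hout]

end Convex

/-! ### Initial paths of a polygon -/

section Chain

variable {p : Pt} {e : Pt × Multiset ℕ} {ch es : List (Pt × Multiset ℕ)} {s : List Pt}

-- In `ExpandChain`, the ascription `(k : ℤ)` coerces the whole list `l` of step lengths.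
theorem expandChain_cons_iff :
    ExpandChain (e :: es) s ↔ ∃ (l : List ℕ) (r : List Pt), (l : Multiset ℕ) = e.2 ∧
      ExpandChain es r ∧ s = l.map (· • e.1) ++ r := by
  have hcoe : ∀ l : List ℕ, (do let k ← l; pure (k : ℤ)) = l.map ((↑) : ℕ → ℤ) := fun l =>
    List.flatMap_pure_eq_map _ l
  have hsmul : ∀ l : List ℕ, (l.map ((↑) : ℕ → ℤ)).map (fun k => (k * e.1.1, k * e.1.2)) =
      l.map (· • e.1) := fun l => by
    rw [List.map_map]
    exact List.map_congr_left fun k _ => by ext <;> simp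
  simp only [ExpandChain, hcoe, hsmul]

/-- The edges of `ch` carry at least one step each, all steps are nontrivial, and consecutive
edges turn left. -/
structure IsLeftTurning (ch : List (Pt × Multiset ℕ)) : Prop where
  ne_zero : ∀ e ∈ ch, e.2 ≠ 0
  pos : ∀ e ∈ ch, ∀ k ∈ e.2, 0 < k
  isChain : (ch.map Prod.fst).IsChain fun u v => 0 < det u v

theorem IsLeftTurning.tail (h : IsLeftTurning (e :: es)) : IsLeftTurning es :=
  ⟨fun f hf => h.ne_zero f (List.mem_cons_of_mem e hf),
    fun f hf => h.pos f (List.mem_cons_of_mem e hf), h.isChain.tail⟩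

theorem det_nsmul_nsmul (j k : ℕ) (u v : Pt) : det (j • u) (k • v) = j * k * det u v := by
  simp only [det, Prod.smul_fst, Prod.smul_snd]
  simp only [nsmul_eq_mul]
  ring

theorem IsLeftTurning.det_pos (h : IsLeftTurning (e :: es)) {k : ℕ} (hk : k ∈ e.2) {v : Pt}
    (hs : ExpandChain es s) (hv : v ∈ s.head?) : 0 < det (k • e.1) v := by
  cases es with
  | nil => simp [show s = [] from hs] at hv
  | cons f es =>
    obtain ⟨l, r, hl, -, rfl⟩ := expandChain_cons_iff.1 hs
    have hf : f ∈ e :: f :: es := by simp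
    obtain ⟨j, l, rfl⟩ := List.exists_cons_of_ne_nil (l := l) <| by
      rintro rfl
      exact h.ne_zero f hf hl.symm
    obtain rfl : j • f.1 = v := by simpa using hv
    have hj : 0 < j := h.pos f hf j (by simp [← hl])
    have hk : 0 < k := h.pos e List.mem_cons_self k hk
    have hdet : 0 < det e.1 f.1 := (List.isChain_cons_cons.1 h.isChain).1
    rw [det_nsmul_nsmul]
    positivity

theorem IsLeftTurning.turnFree (h : IsLeftTurning ch) (hs : ExpandChain ch s) : TurnFree s := by
  induction ch generalizing s with
  | nil => exact (show s = [] from hs) ▸ List.isChain_nil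
  | cons e es ih =>
    obtain ⟨l, r, hl, hr, rfl⟩ := expandChain_cons_iff.1 hs
    refine List.isChain_append.2 ⟨?_, ih h.tail hr, fun u hu v hv => ?_⟩
    · refine (List.isChain_map _).2 (List.Pairwise.isChain (List.pairwise_of_forall fun j k => ?_))
      rw [det_nsmul_nsmul]
      simp [det, mul_comm]
    · obtain ⟨k, hk, rfl⟩ := List.mem_map.1 (List.mem_of_mem_getLast? hu)
      exact (h.det_pos (by simpa [← hl] using hk) hr hv).le

theorem append_eq_append_cons_cons_cases {α : Type*} {m m' l r : List α} {u v : α}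
    (h : m ++ m' = l ++ u :: v :: r) :
    (∃ a, m = l ++ u :: v :: a ∧ r = a ++ m') ∨ (m = l ++ [u] ∧ m' = v :: r) ∨
      ∃ b, l = m ++ b ∧ m' = b ++ u :: v :: r := by
  obtain ⟨b, hl, hm'⟩ | ⟨b, hm, hb⟩ := List.append_eq_append_iff.1 h
  · exact .inr (.inr ⟨b, hl, hm'⟩)
  · match b with
    | [] => exact .inr (.inr ⟨[], by simpa using hm.symm, by simpa using hb.symm⟩)
    | [_] => simp_all
    | _ :: _ :: b => simp_all

theorem IsLeftTurning.expandChain_swap (h : IsLeftTurning ch) {l r : List Pt} {u v : Pt}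
    (hs : ExpandChain ch (l ++ u :: v :: r)) (huv : det u v = 0) :
    ExpandChain ch (l ++ v :: u :: r) := by
  induction ch generalizing l with
  | nil => exact absurd (show l ++ u :: v :: r = [] from hs) (by simp)
  | cons e es ih =>
    obtain ⟨m, s, hm, hs', heq⟩ := expandChain_cons_iff.1 hs
    refine expandChain_cons_iff.2 ?_
    obtain ⟨a, hmap, rfl⟩ | ⟨hmap, rfl⟩ | ⟨b, rfl, rfl⟩ :=
      append_eq_append_cons_cons_cases heq.symm
    · simp only [List.map_eq_append_iff, List.map_eq_cons_iff] at hmap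
      obtain ⟨l, -, rfl, rfl, i, -, rfl, rfl, j, a, rfl, rfl, rfl⟩ := hmap
      refine ⟨l ++ j :: i :: a, s, ?_, hs', by simp⟩
      rw [← hm, Multiset.coe_eq_coe]
      exact (List.Perm.swap _ _ _).append_left l
    · have hu : u ∈ m.map (· • e.1) := hmap ▸ List.mem_append_right l (List.mem_singleton_self u)
      obtain ⟨k, hk, rfl⟩ := List.mem_map.1 hu
      exact absurd huv (h.det_pos (by simpa [← hm] using hk) hs' rfl).ne'
    · exact ⟨m, b ++ v :: u :: r, hm, ih h.tail hs', by simp⟩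

theorem edgeVec_eq (e : Pt × Multiset ℕ) : edgeVec e = e.2.sum • e.1 :=
  Prod.ext (nsmul_eq_mul _ _).symm (nsmul_eq_mul _ _).symm

theorem toR_nsmul (n : ℕ) (v : Pt) : toR (n • v) = (n : ℝ) • toR v := by
  simp [toR]

variable {K : Set (ℝ × ℝ)}

theorem toR_add_nsmul_mem (hK : Convex ℝ K) {d : Pt} {k n : ℕ} (hkn : k ≤ n)
    (hp : toR p ∈ K) (hq : toR (p + n • d) ∈ K) : toR (p + k • d) ∈ K := by
  have hkn' : (k : ℝ) ≤ n := mod_cast hkn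
  have hmem := hK.add_smul_sub_mem hp hq
    ⟨div_nonneg k.cast_nonneg n.cast_nonneg, div_le_one_of_le₀ hkn' n.cast_nonneg⟩
  have hcancel : (k : ℝ) / n * n = k :=
    div_mul_cancel_of_imp fun hn => le_antisymm (hn ▸ hkn') k.cast_nonneg
  rwa [toR_add, add_sub_cancel_left, toR_nsmul, smul_smul, hcancel, ← toR_nsmul, ← toR_add] at hmem

theorem inside_pathFrom_map_nsmul_append (hK : Convex ℝ K) {d : Pt} {l : List ℕ} {r : List Pt}
    (hp : toR p ∈ K) (hr : Inside (toR ⁻¹' K) (pathFrom (p + l.sum • d) r)) :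
    Inside (toR ⁻¹' K) (pathFrom p (l.map (· • d) ++ r)) := by
  induction l generalizing p with
  | nil => simpa using hr
  | cons k l ih =>
    refine List.forall_mem_cons.2 ⟨hp, ih ?_ ?_⟩
    · refine toR_add_nsmul_mem hK (Nat.le_add_right k l.sum) hp ?_
      simpa using hr _ (mem_pathFrom _ r)
    · simpa [add_smul, add_assoc] using hr

theorem inside_of_expandChain (hK : Convex ℝ K) (hch : ∀ z ∈ chainPts p ch, toR z ∈ K)
    (hs : ExpandChain ch s) : Inside (toR ⁻¹' K) (pathFrom p s) := by
  induction ch generalizing p s with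
  | nil =>
    obtain rfl : s = [] := hs
    exact hch
  | cons e es ih =>
    obtain ⟨l, r, hl, hr, rfl⟩ := expandChain_cons_iff.1 hs
    obtain ⟨hp, hes⟩ := List.forall_mem_cons.1 hch
    refine inside_pathFrom_map_nsmul_append hK hp ?_
    rw [edgeVec_eq, ← hl, Multiset.sum_coe] at hes
    exact ih hes hr

theorem isInitialFamily_initChain (hK : Convex ℝ K) (hch : ∀ z ∈ chainPts p ch, toR z ∈ K)
    (h : IsLeftTurning ch) : IsInitialFamily (toR ⁻¹' K) (InitChain p ch) where
  inside := by
    rintro _ ⟨s, hs, rfl⟩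
    exact inside_of_expandChain hK hch hs
  not_turnAt := by
    rintro _ k ⟨s, hs, rfl⟩
    exact turnFree_iff_forall_not_turnAt.1 (h.turnFree hs) k
  init_push := by
    rintro _ k ⟨s, hs, rfl⟩ hk
    obtain ⟨l, u, v, r, rfl, rfl, huv⟩ := turnAt_pathFrom_iff.1 hk
    exact ⟨_, h.expandChain_swap hs huv, push_corner p l u v r⟩

end Chain

theorem PolyData.isLeftTurning_ccw (P : PolyData) : IsLeftTurning P.ccw :=
  ⟨fun e he => (P.ccw_pos e he).1, fun e he => (P.ccw_pos e he).2, P.ccw_conv⟩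

theorem PolyData.isInitialFamily (P : PolyData) :
    IsInitialFamily (polySet P) (InitChain P.p P.ccw) :=
  isInitialFamily_initChain (convex_convexHull ℝ _)
    (fun z hz => subset_convexHull ℝ _ ⟨z, .inr hz, rfl⟩) P.isLeftTurning_ccw

/-- The negative multiplicity recursion may be performed at *any* right
turn, not necessarily the first one. -/
theorem multMinus_any_right_turn (P : PolyData) (γ : List Pt)
    (hinc : Increasing γ)
    (hfrom : γ.head? = some P.p) (hto : γ.getLast? = some P.q)
    (hin : Inside (polySet P) γ)
    (hninit : ¬InitChain P.p P.ccw γ)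
    (k : ℕ) (hk : TurnAt (fun x => x < 0) γ k) :
    multMinusP P γ = triArea2 γ k * multMinusP P (cut γ k) +
      (if Inside (polySet P) (push γ k) then multMinusP P (push γ k) else 0) := by
  have hfin := (chainPts P.p P.cw).finite_toSet.union (chainPts P.p P.ccw).finite_toSet
  exact multMinus_any_right_turn_general (convex_convexHull ℝ _)
    ((hfin.image toR).isClosed_convexHull ℝ) P.isInitialFamily hinc hin hk

end TropPaths
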